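/- Let A be a Calabi–Yau Poisson algebra of dimension ℓ over k with modular derivation δ. Then for every right Poisson A-module M and every integer i there is an isomorphism HP^i(M) ≅ HP_{ℓ−i}(M^δ), where M^δ is the twist of M by δ. -/

import Mathlib

universe u

/-! ### Basic Poisson algebra notions -/

/-- A Poisson algebra structure on a commutative `k`-algebra `A`:
a `k`-bilinear Lie bracket satisfying the Leibniz rule. -/
structure PoissonAlgebra (k A : Type*) [CommRing k] [CommRing A] [Algebra k A] where
  br : A →ₗ[k] A →ₗ[k] A
  skew : ∀ a b, br a b = - br b a
  jacobi : ∀ a b c, br a (br b c) + br b (br c a) + br c (br a b) = 0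
  leibniz : ∀ a b c, br (a * b) c = a * br b c + br a c * b

/-- A left Poisson module structure on an `A`-module `M`, with bracket `br a m = {a, m}`. -/
structure LeftPMod {k A : Type*} [CommRing k] [CommRing A] [Algebra k A]
    (P : PoissonAlgebra k A) (M : Type*) [AddCommGroup M] [Module k M] [Module A M]
    [IsScalarTower k A M] where
  br : A →ₗ[k] M →ₗ[k] M
  lie : ∀ a b m, br (P.br a b) m = br a (br b m) - br b (br a m)
  mul : ∀ a b m, br (a * b) m = a • br b m + b • br a m
  act : ∀ a b m, br a (b • m) = P.br a b • m + b • br a m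

/-- A right Poisson module structure on an `A`-module `M`, with bracket `br m a = {m, a}`. -/
structure RightPMod {k A : Type*} [CommRing k] [CommRing A] [Algebra k A]
    (P : PoissonAlgebra k A) (M : Type*) [AddCommGroup M] [Module k M] [Module A M]
    [IsScalarTower k A M] where
  br : M →ₗ[k] A →ₗ[k] M
  lie : ∀ m a b, br m (P.br a b) = br (br m a) b - br (br m b) a
  mul : ∀ m a b, br m (a * b) = a • br m b + b • br m a
  act : ∀ b m a, br (b • m) a = P.br b a • m + b • br m a

/-- A Poisson derivation of a Poisson algebra. -/
structure PoissonDerivation {k A : Type*} [CommRing k] [CommRing A] [Algebra k A]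
    (P : PoissonAlgebra k A) where
  d : A →ₗ[k] A
  leibniz : ∀ a b, d (a * b) = a * d b + d a * b
  compat : ∀ a b, d (P.br a b) = P.br (d a) b + P.br a (d b)

/-- A log-Hamiltonian derivation is one of the form `a ↦ u⁻¹ * {u, a}` for a unit `u`. -/
def PoissonDerivation.IsLogHamiltonian {k A : Type*} [CommRing k] [CommRing A] [Algebra k A]
    {P : PoissonAlgebra k A} (δ : PoissonDerivation P) : Prop :=
  ∃ u : Aˣ, ∀ a : A, (u : A) * δ.d a = P.br (u : A) a

section HP
set_option maxSynthPendingDepth 3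

open TensorProduct

variable (k : Type u) (A : Type u) [CommRing k] [CommRing A] [Algebra k A]

/-- The wedge `d v₀ ∧ d v₁ ∧ ⋯ ∧ d vₙ₋₁` of Kähler differentials, as an element of the
`n`-th exterior power `⋀[A]^n Ω[A⁄k]`. -/
noncomputable def wedgeD (n : ℕ) (v : Fin n → A) : (⋀[A]^n (Ω[A⁄k]) : Submodule A _) :=
  ⟨ExteriorAlgebra.ιMulti A n (fun i => KaehlerDifferential.D k A (v i)),
    ExteriorAlgebra.ιMulti_range A n (Set.mem_range_self _)⟩

variable {k A}
variable (P : PoissonAlgebra k A)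
variable (M : Type u) [AddCommGroup M] [Module k M] [Module A M] [IsScalarTower k A M]

/-- The Poisson homology chain complex of a right Poisson module `M`: the `n`-th term is
`M ⊗[A] ⋀[A]^n Ω[A⁄k]` and the boundary maps are characterized on generators
`m ⊗ (d a₁ ∧ ⋯ ∧ d aₙ)` by the Brylinski-type formula (written 0-indexed):
`∂(m ⊗ da₀∧⋯∧daₙ) = ∑ᵢ (-1)ⁱ {m,aᵢ} ⊗ da₀∧⋯(omit i)⋯∧daₙ`
`+ ∑_{i<j} (-1)^{i+j} m ⊗ d{aᵢ,aⱼ} ∧ da₀∧⋯(omit i, j)⋯∧daₙ`.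
In the second sum we index `j = i.succAbove j'` with `i ≤ j'`, so that the sign becomes
`(-1)^{i+j'+1}` and the omitted family is `j'.removeNth (i.removeNth v)`. -/
structure PHomologyData (R : RightPMod P M) where
  d : ∀ n : ℕ,
    (M ⊗[A] (⋀[A]^(n+1) (Ω[A⁄k]) : Submodule A _)) →ₗ[k]
      (M ⊗[A] (⋀[A]^n (Ω[A⁄k]) : Submodule A _))
  d_zero : ∀ (m : M) (v : Fin 1 → A),
    d 0 (m ⊗ₜ[A] wedgeD k A 1 v)
      = ∑ i : Fin 1, ((-1 : ℤ) ^ (i : ℕ)) •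
          ((R.br m (v i)) ⊗ₜ[A] wedgeD k A 0 (i.removeNth v))
  d_succ : ∀ (q : ℕ) (m : M) (v : Fin (q + 2) → A),
    d (q + 1) (m ⊗ₜ[A] wedgeD k A (q + 2) v)
      = (∑ i : Fin (q + 2), ((-1 : ℤ) ^ (i : ℕ)) •
            ((R.br m (v i)) ⊗ₜ[A] wedgeD k A (q + 1) (i.removeNth v)))
        + ∑ i : Fin (q + 2), ∑ j : Fin (q + 1),
            if (i : ℕ) ≤ (j : ℕ) then
              ((-1 : ℤ) ^ ((i : ℕ) + (j : ℕ) + 1)) •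
                (m ⊗ₜ[A] wedgeD k A (q + 1)
                  (Fin.cons (P.br (v i) (i.removeNth v j)) (j.removeNth (i.removeNth v))))
            else 0

variable {P M}

/-- The Poisson homology of a right Poisson module, computed from the boundary data. -/
noncomputable def PHomologyData.homology {R : RightPMod P M} (D : PHomologyData P M R) :
    ℕ → Type u
  | 0 => (M ⊗[A] (⋀[A]^0 (Ω[A⁄k]) : Submodule A _)) ⧸ LinearMap.range (D.d 0)
  | n + 1 => LinearMap.ker (D.d n) ⧸
      (LinearMap.range (D.d (n + 1))).comap (LinearMap.ker (D.d n)).subtype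

noncomputable instance PHomologyData.homologyAddCommGroup {R : RightPMod P M}
    (D : PHomologyData P M R) : ∀ n, AddCommGroup (D.homology n)
  | 0 => by unfold PHomologyData.homology; infer_instance
  | n + 1 => by unfold PHomologyData.homology; infer_instance

noncomputable instance PHomologyData.homologyModule {R : RightPMod P M}
    (D : PHomologyData P M R) : ∀ n, Module k (D.homology n)
  | 0 => by unfold PHomologyData.homology; infer_instance
  | n + 1 => by unfold PHomologyData.homology; infer_instance

variable (P M)

/-- The submodule of alternating `n`-multilinear maps `Aⁿ → M` which are derivations in
each argument: the `n`-th term of the Poisson cohomology complex. -/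
def multiDer (k A : Type u) [CommRing k] [CommRing A] [Algebra k A]
    (M : Type u) [AddCommGroup M] [Module k M] [Module A M] [IsScalarTower k A M]
    (n : ℕ) : Submodule k (A [⋀^Fin n]→ₗ[k] M) where
  carrier := {f | ∀ (v : Fin n → A) (i : Fin n) (a b : A),
    f (Function.update v i (a * b))
      = a • f (Function.update v i b) + b • f (Function.update v i a)}
  zero_mem' := by intro v i a b; simp
  add_mem' := by
    intro f g hf hg v i a b
    simp only [AlternatingMap.add_apply, hf v i a b, hg v i a b, smul_add]
    abel
  smul_mem' := by
    intro c f hf v i a b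
    simp only [AlternatingMap.smul_apply, hf v i a b, smul_add]
    rw [smul_comm c a, smul_comm c b]

/-- The Poisson cohomology cochain complex of a right Poisson module `M`: the `n`-th
term is the module of alternating multiderivations `Aⁿ → M` and the Lichnerowicz
differential is characterized by
`δf(a₀,…,aₙ) = ∑ᵢ (-1)^{i+1} {f(a₀,…,(omit i),…,aₙ), aᵢ}`
`+ ∑_{i<j} (-1)^{i+j} f({aᵢ,aⱼ}, a₀, …, (omit i, j), …, aₙ)`,
again rewriting `j = i.succAbove j'` with `i ≤ j'` in the second sum. -/
structure PCohomologyData (R : RightPMod P M) where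
  δ : ∀ n : ℕ, ↥(multiDer k A M n) →ₗ[k] ↥(multiDer k A M (n + 1))
  δ_zero : ∀ (f : multiDer k A M 0) (v : Fin 1 → A),
    (δ 0 f : A [⋀^Fin 1]→ₗ[k] M) v
      = ∑ i : Fin 1, ((-1 : ℤ) ^ ((i : ℕ) + 1)) •
          R.br ((f : A [⋀^Fin 0]→ₗ[k] M) (i.removeNth v)) (v i)
  δ_succ : ∀ (n : ℕ) (f : multiDer k A M (n + 1)) (v : Fin (n + 2) → A),
    (δ (n + 1) f : A [⋀^Fin (n + 2)]→ₗ[k] M) v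
      = (∑ i : Fin (n + 2), ((-1 : ℤ) ^ ((i : ℕ) + 1)) •
            R.br ((f : A [⋀^Fin (n + 1)]→ₗ[k] M) (i.removeNth v)) (v i))
        + ∑ i : Fin (n + 2), ∑ j : Fin (n + 1),
            if (i : ℕ) ≤ (j : ℕ) then
              ((-1 : ℤ) ^ ((i : ℕ) + (j : ℕ) + 1)) •
                (f : A [⋀^Fin (n + 1)]→ₗ[k] M)
                  (Fin.cons (P.br (v i) (i.removeNth v j)) (j.removeNth (i.removeNth v)))
            else 0

variable {P M}

/-- The Poisson cohomology of a right Poisson module, computed from the cochain data. -/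
noncomputable def PCohomologyData.cohomology {R : RightPMod P M} (D : PCohomologyData P M R) :
    ℕ → Type u
  | 0 => LinearMap.ker (D.δ 0)
  | n + 1 => LinearMap.ker (D.δ (n + 1)) ⧸
      (LinearMap.range (D.δ n)).comap (LinearMap.ker (D.δ (n + 1))).subtype

noncomputable instance PCohomologyData.cohomologyAddCommGroup {R : RightPMod P M}
    (D : PCohomologyData P M R) : ∀ n, AddCommGroup (D.cohomology n)
  | 0 => by unfold PCohomologyData.cohomology; infer_instance
  | n + 1 => by unfold PCohomologyData.cohomology; infer_instance

noncomputable instance PCohomologyData.cohomologyModule {R : RightPMod P M}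
    (D : PCohomologyData P M R) : ∀ n, Module k (D.cohomology n)
  | 0 => by unfold PCohomologyData.cohomology; infer_instance
  | n + 1 => by unfold PCohomologyData.cohomology; infer_instance

end HP

set_option maxSynthPendingDepth 3
open TensorProduct

/-!
A trivialisation `e` of the top forms makes every pairing `⋀^p Ω × ⋀^q Ω → A` with `p + q = ℓ`
perfect: a relation `e (s) = 1` with `s` a sum of wedges yields, by Cramer's rule, elements `y_j`
and linear forms `φ_j` with `∑ φ_j(v) d y_j = v` and `∑ φ_j(d y_j) = ℓ`, and then
`∑ ι_{φ_j}(d y_j ∧ y) = (ℓ - p) y` for `y ∈ ⋀^p Ω` rebuilds `p`-forms from `(p + 1)`-forms. Hence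
`m ⊗ z ↦ (b ↦ e(d b₁ ∧ ⋯ ∧ d bₚ ∧ z) • m)` identifies the chains of degree `q` with the cochains of
degree `p`.

That these maps commute with the differentials up to sign is proved by induction on `p`. Cartan's
formula expresses both differentials in degree `p + 1`, evaluated at `b`, through the ones in degree
`p` and the Lie derivatives along `b`; the Lie derivatives match exactly because `δ` is the modular
derivation of the volume form given by `e`. The induction starts at `⋀^(ℓ+1) Ω = 0`, which follows
from the rank of the top forms if `ℓ > 0`; if `ℓ = 0`, then `Ω = 0` since derivations
preserve nilpotent elements.
-/

universe w

namespace PoissonDuality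

section ExteriorAlgebra

open ExteriorAlgebra

variable {R V : Type*} [CommRing R] [AddCommGroup V] [Module R V]

theorem ι_mul_mem {n : ℕ} (v : V) {y : ExteriorAlgebra R V} (hy : y ∈ ⋀[R]^n V) :
    ι R v * y ∈ ⋀[R]^(n + 1) V := by
  rw [exteriorPower, pow_succ']
  exact Submodule.mul_mem_mul (LinearMap.mem_range_self _ v) hy

theorem ι_mul_ι_swap (v w : V) : ι R v * ι R w = -(ι R w * ι R v) :=
  eq_neg_of_add_eq_zero_left (ι_add_mul_swap v w)

theorem exteriorPower_eq_bot_of_le {m n : ℕ} (hm : ⋀[R]^m V = ⊥) (h : m ≤ n) :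
    ⋀[R]^n V = ⊥ := by
  obtain ⟨k, rfl⟩ := Nat.exists_eq_add_of_le h
  rw [exteriorPower, pow_add, ← exteriorPower, hm, Submodule.bot_mul]

theorem ι_mul_eq_neg_one_pow_smul {n : ℕ} (v : V) {y : ExteriorAlgebra R V}
    (hy : y ∈ ⋀[R]^n V) : ι R v * y = (-1 : R) ^ n • (y * ι R v) := by
  induction hy using Submodule.pow_induction_on_left' with
  | algebraMap r => simp [Algebra.commutes]
  | add y z n _ _ ihy ihz => rw [mul_add, ihy, ihz, add_mul, smul_add]
  | mem_mul w hw n y _ ih =>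
    obtain ⟨w, rfl⟩ := hw
    rw [← mul_assoc, ι_mul_ι_swap, neg_mul, mul_assoc, ih, pow_succ]
    simp [mul_assoc]

theorem mul_eq_neg_one_pow_smul_mul {p q : ℕ} {y z : ExteriorAlgebra R V}
    (hy : y ∈ ⋀[R]^p V) (hz : z ∈ ⋀[R]^q V) : y * z = (-1 : R) ^ (p * q) • (z * y) := by
  induction hy using Submodule.pow_induction_on_left' with
  | algebraMap r => simp [Algebra.commutes]
  | add x y p _ _ ihx ihy => rw [mul_add, add_mul, ihx, ihy, smul_add]
  | mem_mul v hv p y _ ih =>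
    obtain ⟨v, rfl⟩ := hv
    rw [mul_assoc, ih, mul_smul_comm, ← mul_assoc, ι_mul_eq_neg_one_pow_smul v hz, smul_mul_assoc,
      smul_smul, mul_assoc, ← pow_add, Nat.succ_mul]

theorem linearEquiv_smul_comm {N : Type*} [AddCommGroup N] [Module R N] (e : N ≃ₗ[R] R)
    (x y : N) : e x • y = e y • x :=
  e.injective (by simp only [map_smul, smul_eq_mul, mul_comm])

/-- For `c = u ∧ t`, replacing `e c • (v ∧ t)` by `e (v ∧ t) • c` turns `e c • (v ∧ c)` into a
multiple of `u ∧ u`. -/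
theorem sq_smul_ι_mul_eq_zero {n : ℕ} (e : ⋀[R]^(n + 1) V ≃ₗ[R] R) (u v : V)
    {t : ExteriorAlgebra R V} (ht : t ∈ ⋀[R]^n V) (d : ⋀[R]^(n + 1) V) :
    e ⟨ι R u * t, ι_mul_mem u ht⟩ ^ 2 • (ι R v * (d : ExteriorAlgebra R V)) = 0 := by
  set c : ⋀[R]^(n + 1) V := ⟨ι R u * t, ι_mul_mem u ht⟩
  have exchange (x y : ⋀[R]^(n + 1) V) : e x • (y : ExteriorAlgebra R V) = e y • ↑x :=
    congrArg Subtype.val (linearEquiv_smul_comm e x y)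
  have hc : e c • (ι R v * (c : ExteriorAlgebra R V)) = 0 := by
    have hvt := exchange c ⟨ι R v * t, ι_mul_mem v ht⟩
    calc e c • (ι R v * (ι R u * t))
        = -(ι R u * (e c • (ι R v * t))) := by
          rw [← mul_assoc, ι_mul_ι_swap, neg_mul, smul_neg, mul_assoc, mul_smul_comm]
      _ = 0 := by rw [hvt, mul_smul_comm, ← mul_assoc, ι_sq_zero, zero_mul, smul_zero, neg_zero]
  rw [sq, mul_smul, ← mul_smul_comm, exchange, mul_smul_comm, smul_comm, hc, smul_zero]

theorem exteriorPower_succ_eq_bot {n : ℕ} (e : ⋀[R]^(n + 1) V ≃ₗ[R] R) :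
    ⋀[R]^(n + 2) V = ⊥ := by
  have hsq (u : V) (t : ExteriorAlgebra R V) (ht : t ∈ ⋀[R]^n V) :
      e ⟨ι R u * t, ι_mul_mem u ht⟩ ^ 2 ∈ (⋀[R]^(n + 2) V).annihilator := by
    rw [Submodule.mem_annihilator]
    intro z hz
    rw [exteriorPower, pow_succ'] at hz
    induction hz using Submodule.mul_induction_on' with
    | mem_mul_mem v hv d hd =>
      obtain ⟨v, rfl⟩ := hv
      exact sq_smul_ι_mul_eq_zero e u v ht ⟨d, hd⟩
    | add y _ z _ hy hz => rw [smul_add, hy, hz, add_zero]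
  have hrad (x : ExteriorAlgebra R V) (hx : x ∈ ⋀[R]^(n + 1) V) :
      e ⟨x, hx⟩ ∈ (⋀[R]^(n + 2) V).annihilator.radical := by
    have hx' := hx
    rw [exteriorPower, pow_succ'] at hx'
    induction hx' using Submodule.mul_induction_on' with
    | mem_mul_mem u hu t ht =>
      obtain ⟨u, rfl⟩ := hu
      exact ⟨2, hsq u t ht⟩
    | add y hy z hz ihy ihz =>
      rw [← pow_succ'] at hy hz
      exact (congrArg (· ∈ _) (map_add e ⟨y, hy⟩ ⟨z, hz⟩)).mpr (add_mem (ihy hy) (ihz hz))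
  have hone : (⋀[R]^(n + 2) V).annihilator = ⊤ := by
    rw [← Ideal.radical_eq_top, Ideal.eq_top_iff_one]
    simpa using hrad (e.symm 1) (e.symm 1).2
  rwa [Submodule.annihilator_eq_top_iff] at hone

theorem alternatingMap_eq_zero {N : Type*} [AddCommGroup N] [Module R N] {n : ℕ}
    (h : ⋀[R]^n V = ⊥) (f : V [⋀^Fin n]→ₗ[R] N) : f = 0 := by
  ext v
  have hv : exteriorPower.ιMulti R n v = 0 :=
    Subtype.ext ((Submodule.eq_bot_iff _).1 h _ (exteriorPower.ιMulti R n v).2)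
  rw [← exteriorPower.alternatingMapLinearEquiv_apply_ιMulti, hv, map_zero,
    AlternatingMap.zero_apply]

theorem map_cons_removeNth {N : Type*} [AddCommGroup N] [Module R N] {n : ℕ}
    (g : V [⋀^Fin (n + 1)]→ₗ[R] N) (v : V) (c : Fin (n + 1) → V) (i : Fin (n + 1)) :
    g (Fin.cons v (i.removeNth c)) = (-1 : ℤ) ^ (i : ℕ) • g (Function.update c i v) := by
  rw [← Fin.insertNth_removeNth]
  exact (g.neg_one_pow_smul_map_insertNth i v _).symm

theorem removeNth_succ_cons {α : Type*} {n : ℕ} (a : α) (c : Fin (n + 1) → α) (i : Fin (n + 1)) :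
    i.succ.removeNth (Fin.cons a c : Fin (n + 2) → α) = Fin.cons a (i.removeNth c) := by
  funext j
  cases j using Fin.cases <;> simp [Fin.removeNth]

/-- Cramer's rule: alternating `g(v₁, …, vₗ) • v₀` over its `ℓ + 1` arguments gives zero. -/
theorem map_smul_eq_sum_update {ℓ : ℕ} (h : ⋀[R]^(ℓ + 1) V = ⊥) (g : V [⋀^Fin ℓ]→ₗ[R] R)
    (c : Fin ℓ → V) (v : V) : g c • v = ∑ i, g (Function.update c i v) • c i := by
  let f : V →ₗ[R] V [⋀^Fin ℓ]→ₗ[R] V :=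
    { toFun := g.smulRight
      map_add' := fun y z => by ext; simp
      map_smul' := fun r y => by ext; simp [smul_comm r] }
  have halt := DFunLike.congr_fun
    (alternatingMap_eq_zero h (AlternatingMap.alternatizeUncurryFin f)) (Fin.cons v c)
  rw [AlternatingMap.alternatizeUncurryFin_apply, Fin.sum_univ_succ,
    AlternatingMap.zero_apply] at halt
  have hsucc (i : Fin ℓ) : (-1 : ℤ) ^ ((i.succ : Fin (ℓ + 1)) : ℕ) •
      g (i.succ.removeNth (Fin.cons v c : Fin (ℓ + 1) → V)) = -g (Function.update c i v) := by
    obtain ⟨n, rfl⟩ : ∃ n, ℓ = n + 1 := Nat.exists_eq_succ_of_ne_zero i.pos.ne'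
    rw [removeNth_succ_cons, map_cons_removeNth, smul_smul, Fin.val_succ, pow_succ', neg_one_mul,
      neg_mul, ← mul_pow, neg_one_mul, neg_neg, one_pow, neg_one_smul]
  simp only [f, LinearMap.coe_mk, AddHom.coe_mk, AlternatingMap.smulRight_apply, Fin.val_zero,
    pow_zero, one_smul, Fin.cons_zero, Fin.cons_succ, Fin.removeNth_zero, Fin.tail_cons,
    ← smul_assoc, hsucc, neg_smul, Finset.sum_neg_distrib] at halt
  exact eq_of_sub_eq_zero (by rwa [sub_eq_add_neg])

theorem span_range_ιMulti_comp {S : Type*} {s : S → V} (hs : Submodule.span R (Set.range s) = ⊤)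
    (n : ℕ) :
    Submodule.span R (Set.range fun c : Fin n → S => exteriorPower.ιMulti R n (s ∘ c)) = ⊤ := by
  rw [← exteriorPower.ιMulti_span_of_span R n V hs]
  congr 1
  ext x
  constructor
  · rintro ⟨c, rfl⟩
    exact ⟨s ∘ c, Set.range_comp_subset_range c s, rfl⟩
  · rintro ⟨v, hv, rfl⟩
    choose c hc using fun i => hv (Set.mem_range_self i)
    exact ⟨c, congrArg _ (funext hc)⟩

theorem exists_dual_family {S : Type w} {s : S → V} (hs : Submodule.span R (Set.range s) = ⊤)
    {ℓ : ℕ} (h : ⋀[R]^(ℓ + 1) V = ⊥) (e : ⋀[R]^ℓ V ≃ₗ[R] R) :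
    ∃ (J : Type w) (_ : Fintype J) (x : J → S) (φ : J → Module.Dual R V),
      (∀ v, ∑ j, φ j v • s (x j) = v) ∧ ∑ j, φ j (s (x j)) = (ℓ : R) := by
  have hone : e.symm 1 ∈ Submodule.span R (Set.range fun c : Fin ℓ → S =>
      exteriorPower.ιMulti R ℓ (s ∘ c)) := by
    rw [span_range_ιMulti_comp hs]; trivial
  obtain ⟨a, ha⟩ := Finsupp.mem_span_range_iff_exists_finsupp.1 hone
  let g : V [⋀^Fin ℓ]→ₗ[R] R := e.toLinearMap.compAlternatingMap (exteriorPower.ιMulti R ℓ)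
  have hg : ∑ c : a.support, a c * g (s ∘ c) = 1 := by
    have := congrArg e ha
    rw [e.apply_symm_apply, Finsupp.sum, map_sum, ← Finset.sum_coe_sort] at this
    simpa [g] using this
  refine ⟨a.support × Fin ℓ, inferInstance, fun ci => ci.1.1 ci.2,
    fun ci => a ci.1 • g.toMultilinearMap.toLinearMap (s ∘ ci.1) ci.2, fun v => ?_, ?_⟩
  · calc ∑ ci : a.support × Fin ℓ,
          (a ci.1 • g.toMultilinearMap.toLinearMap (s ∘ ci.1) ci.2) v • s (ci.1.1 ci.2)
        = ∑ c : a.support, a c • ∑ i, g (Function.update (s ∘ c) i v) • (s ∘ c) i := by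
          rw [Fintype.sum_prod_type]
          simp [Finset.smul_sum, mul_smul]
      _ = ∑ c : a.support, (a c * g (s ∘ c)) • v := by
          simp only [← map_smul_eq_sum_update h, mul_smul]
      _ = v := by rw [← Finset.sum_smul, hg, one_smul]
  · calc ∑ ci : a.support × Fin ℓ,
          (a ci.1 • g.toMultilinearMap.toLinearMap (s ∘ ci.1) ci.2) (s (ci.1.1 ci.2))
        = ∑ c : a.support, ∑ i : Fin ℓ, a c * g (Function.update (s ∘ c) i ((s ∘ c) i)) := by
          rw [Fintype.sum_prod_type]
          simp
      _ = ∑ c : a.support, (ℓ : R) * (a c * g (s ∘ c)) := by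
          simp only [Function.update_eq_self, Finset.sum_const, Finset.card_univ, Fintype.card_fin,
            nsmul_eq_mul]
      _ = ℓ := by rw [← Finset.mul_sum, hg, mul_one]

section Contraction

/-- Contraction of the exterior algebra by a linear form `φ`, the antiderivation extending `φ`. -/
noncomputable def contract (φ : Module.Dual R V) : ExteriorAlgebra R V →ₗ[R] ExteriorAlgebra R V :=
  CliffordAlgebra.contractLeft (Q := (0 : QuadraticForm R V)) φ

theorem contract_algebraMap (φ : Module.Dual R V) (r : R) :
    contract φ (algebraMap R (ExteriorAlgebra R V) r) = 0 :=
  CliffordAlgebra.contractLeft_algebraMap 0 φ r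

theorem contract_ι_mul (φ : Module.Dual R V) (v : V) (y : ExteriorAlgebra R V) :
    contract φ (ι R v * y) = φ v • y - ι R v * contract φ y :=
  CliffordAlgebra.contractLeft_ι_mul φ v y

variable {J : Type*} [Fintype J] {x : J → V} {φ : J → Module.Dual R V}

theorem sum_ι_mul_contract (hφ : ∀ v, ∑ j, φ j v • x j = v) {n : ℕ} {y : ExteriorAlgebra R V}
    (hy : y ∈ ⋀[R]^n V) : ∑ j, ι R (x j) * contract (φ j) y = (n : R) • y := by
  induction hy using Submodule.pow_induction_on_left' with
  | algebraMap r => simp [contract_algebraMap]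
  | add y z n _ _ ihy ihz =>
    simp only [map_add, mul_add, Finset.sum_add_distrib, ihy, ihz, smul_add]
  | mem_mul w hw n y _ ih =>
    obtain ⟨w, rfl⟩ := hw
    have hterm (j : J) : ι R (x j) * contract (φ j) (ι R w * y)
        = ι R (φ j w • x j) * y + ι R w * (ι R (x j) * contract (φ j) y) := by
      rw [contract_ι_mul, mul_sub, map_smul, smul_mul_assoc, mul_smul_comm, ← mul_assoc (ι R w),
        ι_mul_ι_swap w, neg_mul, sub_eq_add_neg, mul_assoc]
    simp_rw [hterm]
    rw [Finset.sum_add_distrib, ← Finset.sum_mul, ← map_sum, hφ, ← Finset.mul_sum, ih,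
      mul_smul_comm, Nat.cast_succ, add_smul, one_smul, add_comm]

theorem sum_contract_ι_mul (hφ : ∀ v, ∑ j, φ j v • x j = v) {n : ℕ} {y : ExteriorAlgebra R V}
    (hy : y ∈ ⋀[R]^n V) :
    ∑ j, contract (φ j) (ι R (x j) * y) = (∑ j, φ j (x j) - (n : R)) • y := by
  rw [sub_smul, ← sum_ι_mul_contract hφ hy, Finset.sum_smul, ← Finset.sum_sub_distrib]
  simp only [contract_ι_mul]

end Contraction

section Duality

/-- The projection of the exterior algebra onto its homogeneous component of degree `n`. -/
noncomputable def proj (n : ℕ) : ExteriorAlgebra R V →ₗ[R] ⋀[R]^n V :=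
  DirectSum.component R ℕ (fun i => ⋀[R]^i V) n ∘ₗ
    (DirectSum.decomposeLinearEquiv fun i => ⋀[R]^i V).toLinearMap

theorem proj_coe {n : ℕ} (y : ⋀[R]^n V) : proj n (y : ExteriorAlgebra R V) = y := by
  rw [proj, LinearMap.comp_apply, LinearEquiv.coe_coe, DirectSum.decomposeLinearEquiv_apply,
    DirectSum.decompose_coe]
  exact DirectSum.component.lof_self (M := fun i => ⋀[R]^i V) R n y

theorem eq_smul_symm_one {N : Type*} [AddCommGroup N] [Module R N] (e : N ≃ₗ[R] R) (x : N) :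
    x = e x • e.symm 1 := by
  rw [← map_smul, smul_eq_mul, mul_one, e.symm_apply_apply]

variable {J : Type w} [Fintype J] {x : J → V} {φ : J → Module.Dual R V} {ℓ : ℕ}

theorem natCast_smul_eq_sum_contract (hφ : ∀ v, ∑ j, φ j v • x j = v)
    (htr : ∑ j, φ j (x j) = (ℓ : R)) {p q : ℕ} (hpq : p + q = ℓ) {ε : ExteriorAlgebra R V →ₗ[R] R}
    {I : Type*} [Fintype I] {u : I → ExteriorAlgebra R V} {w : I → ⋀[R]^(p + 1) V}
    (huw : ∀ z : ⋀[R]^(p + 1) V, z = ∑ i, ε (z * u i) • w i) (y : ⋀[R]^p V) :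
    (q : R) • (y : ExteriorAlgebra R V)
      = ∑ j, ∑ i, (-1 : R) ^ p • ε (y * (ι R (x j) * u i)) • contract (φ j) (w i) := by
  have hterm (j : J) : contract (φ j) (ι R (x j) * y)
      = ∑ i, (-1 : R) ^ p • ε (y * (ι R (x j) * u i)) • contract (φ j) (w i) := by
    have h := congrArg (fun z : ⋀[R]^(p + 1) V => contract (φ j) (z : ExteriorAlgebra R V))
      (huw ⟨_, ι_mul_mem (x j) y.2⟩)
    simpa only [Submodule.coe_sum, Submodule.coe_smul, map_sum, map_smul,
      ι_mul_eq_neg_one_pow_smul (x j) y.2, smul_mul_assoc, mul_assoc, smul_assoc] using h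
  have hq : (q : R) = ∑ j, φ j (x j) - (p : R) := by rw [htr, ← hpq]; push_cast; ring
  rw [hq, ← sum_contract_ι_mul hφ y.2]
  exact Finset.sum_congr rfl fun j _ => hterm j

theorem exists_reproducing_families (hφ : ∀ v, ∑ j, φ j v • x j = v)
    (htr : ∑ j, φ j (x j) = (ℓ : R)) (hℓ : IsUnit (ℓ.factorial : R)) (e : ⋀[R]^ℓ V ≃ₗ[R] R)
    (p q : ℕ) (hpq : p + q = ℓ) :
    ∃ (I : Type w) (_ : Fintype I) (u : I → ⋀[R]^q V) (w : I → ⋀[R]^p V),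
      ∀ y : ⋀[R]^p V, y = ∑ i, e (proj ℓ (y * u i : ExteriorAlgebra R V)) • w i := by
  induction q generalizing p with
  | zero =>
    subst hpq
    refine ⟨PUnit, inferInstance, fun _ => ⟨1, ?_⟩, fun _ => e.symm 1, fun y => ?_⟩
    · rw [exteriorPower, pow_zero]; exact Submodule.one_le.1 le_rfl
    · simpa [proj_coe] using eq_smul_symm_one e y
  | succ q ih =>
    obtain ⟨I, _, u, w, huw⟩ := ih (p + 1) (by omega)
    obtain ⟨c, hc⟩ := (isUnit_of_dvd_unit (Nat.cast_dvd_cast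
      (Nat.dvd_factorial q.succ_pos (by omega : q + 1 ≤ ℓ))) hℓ).exists_left_inv
    refine ⟨J × I, inferInstance, fun ji => ⟨_, ι_mul_mem (x ji.1) (u ji.2).2⟩,
      fun ji => ((-1) ^ p * c) • proj p (contract (φ ji.1) (w ji.2)), fun y => ?_⟩
    have hexpand := natCast_smul_eq_sum_contract hφ htr hpq (ε := e.toLinearMap ∘ₗ proj ℓ) huw y
    calc y = proj p (c • ((q + 1 : ℕ) : R) • (y : ExteriorAlgebra R V)) := by
          rw [smul_smul, hc, one_smul, proj_coe]
      _ = _ := by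
          simp only [hexpand, Finset.smul_sum, map_sum, map_smul, Fintype.sum_prod_type,
            smul_smul, LinearMap.comp_apply, LinearEquiv.coe_coe]
          exact Finset.sum_congr rfl fun j _ => Finset.sum_congr rfl fun i _ => by congr 1; ring

variable {M : Type*} [AddCommGroup M] [Module R M]

/-- The contraction `(y, m ⊗ z) ↦ ε (y ∧ z) • m` against a linear form `ε` on the exterior
algebra. -/
noncomputable def pairing (ε : ExteriorAlgebra R V →ₗ[R] R) (M : Type*) [AddCommGroup M]
    [Module R M] (q : ℕ) : ExteriorAlgebra R V →ₗ[R] (M ⊗[R] ⋀[R]^q V) →ₗ[R] M :=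
  (LinearMap.lTensorHom M ∘ₗ
    ((LinearMap.mul R (ExteriorAlgebra R V)).compr₂ ε).domRestrict₂ (⋀[R]^q V)).compr₂
      (TensorProduct.rid R M).toLinearMap

theorem pairing_tmul (ε : ExteriorAlgebra R V →ₗ[R] R) {q : ℕ} (y : ExteriorAlgebra R V) (m : M)
    (z : ⋀[R]^q V) : pairing ε M q y (m ⊗ₜ z) = ε (y * z) • m := by
  simp [pairing, LinearMap.domRestrict₂_apply]

/-- The duality map sending `m ⊗ z` to the `M`-valued `p`-form `v ↦ ε (v₁ ∧ ⋯ ∧ vₚ ∧ z) • m`. -/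
noncomputable def volumeDual (ε : ExteriorAlgebra R V →ₗ[R] R) (M : Type*) [AddCommGroup M]
    [Module R M] (p q : ℕ) : (M ⊗[R] ⋀[R]^q V) →ₗ[R] V [⋀^Fin p]→ₗ[R] M where
  toFun τ := ((pairing ε M q).flip τ).compAlternatingMap (ιMulti R p)
  map_add' τ σ := by ext; simp
  map_smul' r τ := by ext; simp

theorem volumeDual_apply (ε : ExteriorAlgebra R V →ₗ[R] R) {p q : ℕ} (τ : M ⊗[R] ⋀[R]^q V)
    (v : Fin p → V) : volumeDual ε M p q τ v = pairing ε M q (ιMulti R p v) τ := rfl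

theorem pairing_eq_zero_of_volumeDual_eq_zero {ε : ExteriorAlgebra R V →ₗ[R] R} {p q : ℕ}
    {τ : M ⊗[R] ⋀[R]^q V} (hτ : volumeDual ε M p q τ = 0) (y : ⋀[R]^p V) :
    pairing ε M q y τ = 0 := by
  have h : (pairing ε M q).flip τ ∘ₗ (⋀[R]^p V).subtype = 0 :=
    exteriorPower.linearMap_ext (AlternatingMap.ext fun v => DFunLike.congr_fun hτ v)
  exact LinearMap.congr_fun h y

theorem volumeDual_injective {p q : ℕ} {I : Type*} [Fintype I]
    {ε : ExteriorAlgebra R V →ₗ[R] R} {u : I → ⋀[R]^p V} {w : I → ⋀[R]^q V}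
    (huw : ∀ y : ⋀[R]^q V, y = ∑ i, ε (y * u i : ExteriorAlgebra R V) • w i) :
    Function.Injective (volumeDual ε M p q) := by
  have hexpand (τ : M ⊗[R] ⋀[R]^q V) :
      τ = (-1 : R) ^ (q * p) • ∑ i, pairing ε M q (u i) τ ⊗ₜ w i := by
    induction τ with
    | zero => simp
    | tmul m y =>
      conv_lhs => rw [huw y]
      simp only [tmul_sum, tmul_smul, pairing_tmul, smul_tmul', Finset.smul_sum, smul_smul,
        mul_eq_neg_one_pow_smul_mul y.2 (u _).2, map_smul, smul_eq_mul]
    | add τ σ hτ hσ =>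
      simp only [map_add, add_tmul, Finset.sum_add_distrib, smul_add, ← hτ, ← hσ]
  refine (injective_iff_map_eq_zero _).2 fun τ hτ => ?_
  rw [hexpand τ]
  simp [pairing_eq_zero_of_volumeDual_eq_zero hτ]

theorem volumeDual_surjective {p q : ℕ} {I : Type*} [Fintype I]
    {ε : ExteriorAlgebra R V →ₗ[R] R} {u : I → ⋀[R]^q V} {w : I → ⋀[R]^p V}
    (huw : ∀ y : ⋀[R]^p V, y = ∑ i, ε (y * u i : ExteriorAlgebra R V) • w i) :
    Function.Surjective (volumeDual ε M p q) := by
  intro F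
  let F' := exteriorPower.alternatingMapLinearEquiv F
  refine ⟨∑ i, F' (w i) ⊗ₜ u i, AlternatingMap.ext fun v => ?_⟩
  calc volumeDual ε M p q (∑ i, F' (w i) ⊗ₜ u i) v
      = F' (∑ i, ε (ιMulti R p v * u i) • w i) := by
        rw [volumeDual_apply, map_sum, map_sum]
        simp only [pairing_tmul, map_smul]
    _ = F' (exteriorPower.ιMulti R p v) := congrArg F' (huw (exteriorPower.ιMulti R p v)).symm
    _ = F v := exteriorPower.alternatingMapLinearEquiv_apply_ιMulti F v

theorem volumeDual_bijective (hφ : ∀ v, ∑ j, φ j v • x j = v)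
    (htr : ∑ j, φ j (x j) = (ℓ : R)) (hℓ : IsUnit (ℓ.factorial : R)) (e : ⋀[R]^ℓ V ≃ₗ[R] R)
    {p q : ℕ} (hpq : p + q = ℓ) :
    Function.Bijective (volumeDual (e.toLinearMap ∘ₗ proj ℓ) M p q) := by
  obtain ⟨I, _, u, w, huw⟩ := exists_reproducing_families hφ htr hℓ e p q hpq
  obtain ⟨I', _, u', w', huw'⟩ := exists_reproducing_families hφ htr hℓ e q p (by omega)
  exact ⟨volumeDual_injective huw', volumeDual_surjective huw⟩

/-- Left exterior multiplication by a vector, as a map `⋀^n V → ⋀^(n+1) V`. -/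
noncomputable def leftWedge (v : V) (n : ℕ) : ⋀[R]^n V →ₗ[R] ⋀[R]^(n + 1) V :=
  (LinearMap.mulLeft R (ι R v)).restrict fun _ hy => ι_mul_mem v hy

theorem leftWedge_coe (v : V) {n : ℕ} (y : ⋀[R]^n V) :
    (leftWedge v n y : ExteriorAlgebra R V) = ι R v * y := rfl

theorem pairing_lTensor_leftWedge (ε : ExteriorAlgebra R V →ₗ[R] R) {M : Type*} [AddCommGroup M]
    [Module R M] {n : ℕ} (v : V) (y : ExteriorAlgebra R V) (τ : M ⊗[R] ⋀[R]^n V) :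
    pairing ε M (n + 1) y ((leftWedge v n).lTensor M τ) = pairing ε M n (y * ι R v) τ := by
  induction τ with
  | zero => simp
  | tmul m z => simp only [LinearMap.lTensor_tmul, pairing_tmul, leftWedge_coe, mul_assoc]
  | add τ σ hτ hσ => simp only [map_add, hτ, hσ]

end Duality

end ExteriorAlgebra

section Multiderivations

open KaehlerDifferential

variable {k A : Type u} [CommRing k] [CommRing A] [Algebra k A]
variable {M : Type u} [AddCommGroup M] [Module k M] [Module A M] [IsScalarTower k A M]

theorem D_update {p : ℕ} (b : Fin p → A) (i : Fin p) (a : A) :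
    (fun j => D k A (Function.update b i a j))
      = Function.update (fun j => D k A (b j)) i (D k A a) :=
  funext fun j => Function.apply_update (fun _ => D k A) b i a j

/-- The multiderivation `b ↦ G (d b₁, …, d bₚ)` represented by an alternating form `G` on the
Kähler differentials. -/
noncomputable def formToMultiDer (p : ℕ) : (Ω[A⁄k] [⋀^Fin p]→ₗ[A] M) →ₗ[k] multiDer k A M p where
  toFun G :=
    ⟨{ toMultilinearMap :=
          (G.toMultilinearMap.restrictScalars k).compLinearMap fun _ => (D k A).toLinearMap
       map_eq_zero_of_eq' := fun b i j h hij =>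
          G.map_eq_zero_of_eq (fun i => D k A (b i)) (congrArg (D k A) h) hij },
      fun b i a c => show G (fun j => D k A (Function.update b i (a * c) j))
          = a • G (fun j => D k A (Function.update b i c j))
            + c • G (fun j => D k A (Function.update b i a j)) by
        simp only [D_update, Derivation.leibniz, AlternatingMap.map_update_add,
          AlternatingMap.map_update_smul]⟩
  map_add' _ _ := rfl
  map_smul' _ _ := rfl

theorem formToMultiDer_injective (p : ℕ) :
    Function.Injective (formToMultiDer p : (Ω[A⁄k] [⋀^Fin p]→ₗ[A] M) →ₗ[k] multiDer k A M p) := by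
  intro G H hGH
  refine exteriorPower.alternatingMapLinearEquiv.injective
    (LinearMap.ext_on_range (span_range_ιMulti_comp (span_range_derivation k A) p) fun b => ?_)
  rw [exteriorPower.alternatingMapLinearEquiv_apply_ιMulti,
    exteriorPower.alternatingMapLinearEquiv_apply_ιMulti]
  exact DFunLike.congr_fun (congrArg Subtype.val hGH) b

/-- The derivation obtained from a multiderivation by freezing all arguments but one. -/
def slot {p : ℕ} (F : multiDer k A M p) (b : Fin p → A) (i : Fin p) : Derivation k A M :=
  Derivation.mk' (F.1.toMultilinearMap.toLinearMap b i) fun a c => F.2 b i a c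

theorem derivation_apply_eq_sum {J : Type*} [Fintype J] {y : J → A}
    {φ : J → Module.Dual A Ω[A⁄k]} (hφ : ∀ v, ∑ j, φ j v • D k A (y j) = v)
    (d : Derivation k A M) (a : A) : d a = ∑ j, φ j (D k A a) • d (y j) := by
  conv_lhs => rw [← d.liftKaehlerDifferential_comp_D, ← hφ (D k A a)]
  simp

theorem apply_eq_sum_of_forall_derivation {J : Type*} [Fintype J] {y : J → A}
    {φ : J → Module.Dual A Ω[A⁄k]} (hφ : ∀ v, ∑ j, φ j v • D k A (y j) = v) {p : ℕ}
    (f : (Fin p → A) → M)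
    (hf : ∀ b i, ∃ d : Derivation k A M, ∀ a, f (Function.update b i a) = d a) (b : Fin p → A) :
    f b = ∑ s : Fin p → J, (∏ i, φ (s i) (D k A (b i))) • f (y ∘ s) := by
  induction p with
  | zero => simp [Subsingleton.elim b (y ∘ (default : Fin 0 → J))]
  | succ p ih =>
    have hhead (a : A) (c : Fin p → A) :
        f (Fin.cons a c) = ∑ j, φ j (D k A a) • f (Fin.cons (y j) c) := by
      obtain ⟨d, hd⟩ := hf (Fin.cons a c) 0
      simp only [Fin.update_cons_zero] at hd
      simp only [hd, derivation_apply_eq_sum hφ d a]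
    have htail (a : A) (c : Fin p → A) (i : Fin p) :
        ∃ d : Derivation k A M, ∀ x, f (Fin.cons a (Function.update c i x)) = d x := by
      simpa only [Fin.cons_update] using hf (Fin.cons a c) i.succ
    have hcons (j : J) (s : Fin p → J) :
        y ∘ (Fin.cons j s : Fin (p + 1) → J) = Fin.cons (y j) (y ∘ s) :=
      Fin.comp_cons y j s
    obtain ⟨a, c, rfl⟩ : ∃ a c, b = Fin.cons a c := ⟨b 0, Fin.tail b, (Fin.cons_self_tail b).symm⟩
    rw [ih (fun c => f (Fin.cons a c)) (htail a) c, ← (Fin.consEquiv fun _ => J).sum_comp,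
      Fintype.sum_prod_type, Finset.sum_comm]
    refine Finset.sum_congr rfl fun s _ => ?_
    rw [hhead, Finset.smul_sum]
    refine Finset.sum_congr rfl fun j _ => ?_
    simp only [Fin.consEquiv, Equiv.coe_fn_mk, Fin.prod_univ_succ, Fin.cons_zero, Fin.cons_succ,
      hcons, smul_smul, mul_comm]

theorem formToMultiDer_surjective {J : Type*} [Fintype J] {y : J → A}
    {φ : J → Module.Dual A Ω[A⁄k]} (hφ : ∀ v, ∑ j, φ j v • D k A (y j) = v) (p : ℕ) :
    Function.Surjective (formToMultiDer p : (Ω[A⁄k] [⋀^Fin p]→ₗ[A] M) →ₗ[k] multiDer k A M p) := by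
  classical
  intro F
  let μ : MultilinearMap A (fun _ : Fin p => Ω[A⁄k]) M := ∑ s : Fin p → J,
    ((MultilinearMap.mkPiAlgebra A (Fin p) A).compLinearMap fun i => φ (s i)).smulRight
      (F.1 (y ∘ s))
  have hμ (v : Fin p → Ω[A⁄k]) : μ v = ∑ s : Fin p → J, (∏ i, φ (s i) (v i)) • F.1 (y ∘ s) := by
    simp [μ]
  have halt (v : Fin p → Ω[A⁄k]) (i j : Fin p) (h : v i = v j) (hij : i ≠ j) : μ v = 0 := by
    have hv (l : Fin p) : v (Equiv.swap i j l) = v l := Equiv.apply_swap_eq_self h l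
    rw [hμ]
    refine Finset.sum_involution (fun s _ => s ∘ Equiv.swap i j) (fun s _ => ?_)
      (fun s _ hs hfix => hs ?_) (fun _ _ => Finset.mem_univ _) fun s _ => by ext; simp
    · rw [← Function.comp_assoc, F.1.map_swap _ hij,
        ← Equiv.prod_comp (Equiv.swap i j) fun l => φ (s l) (v l)]
      simp [hv]
    · rw [F.1.map_eq_zero_of_eq (y ∘ s) _ hij, smul_zero]
      simpa using congrArg y (congrFun hfix j)
  refine ⟨{ μ with map_eq_zero_of_eq' := halt }, Subtype.ext (AlternatingMap.ext fun b => ?_)⟩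
  rw [apply_eq_sum_of_forall_derivation hφ F.1 (fun b i => ⟨slot F b i, fun _ => rfl⟩) b]
  exact hμ _

instance isScalarTower_alternatingMap (p : ℕ) : IsScalarTower k A (Ω[A⁄k] [⋀^Fin p]→ₗ[A] M) :=
  ⟨fun r a G => AlternatingMap.ext fun v => smul_assoc r a (G v)⟩

/-- Poincaré duality at the level of terms: `m ⊗ z` is sent to the multiderivation
`b ↦ ε (d b₁ ∧ ⋯ ∧ d bₚ ∧ z) • m`. -/
noncomputable def dualityMap {ℓ : ℕ} (ε : ⋀[A]^ℓ Ω[A⁄k] →ₗ[A] A) (M : Type u) [AddCommGroup M]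
    [Module k M] [Module A M] [IsScalarTower k A M] (p q : ℕ) :
    (M ⊗[A] ⋀[A]^q Ω[A⁄k]) →ₗ[k] multiDer k A M p :=
  formToMultiDer p ∘ₗ (volumeDual (ε ∘ₗ proj ℓ) M p q).restrictScalars k

theorem dualityMap_apply {ℓ : ℕ} (ε : ⋀[A]^ℓ Ω[A⁄k] →ₗ[A] A) {p q : ℕ}
    (τ : M ⊗[A] ⋀[A]^q Ω[A⁄k]) (b : Fin p → A) :
    (dualityMap ε M p q τ).1 b = pairing (ε ∘ₗ proj ℓ) M q (wedgeD k A p b) τ := rfl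

theorem dualityMap_bijective {ℓ : ℕ} (hℓ : IsUnit (ℓ.factorial : A))
    (h : ⋀[A]^(ℓ + 1) Ω[A⁄k] = ⊥) (e : ⋀[A]^ℓ Ω[A⁄k] ≃ₗ[A] A) {p q : ℕ} (hpq : p + q = ℓ) :
    Function.Bijective (dualityMap e.toLinearMap M p q) := by
  obtain ⟨J, _, y, φ, hφ, htr⟩ := exists_dual_family (span_range_derivation k A) h e
  have hform : Function.Bijective (formToMultiDer (k := k) (A := A) (M := M) p) :=
    ⟨formToMultiDer_injective p, formToMultiDer_surjective hφ p⟩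
  exact hform.comp (volumeDual_bijective hφ htr hℓ e hpq)

theorem subsingleton_multiDer {ℓ p : ℕ} (h : ⋀[A]^(ℓ + 1) Ω[A⁄k] = ⊥)
    (e : ⋀[A]^ℓ Ω[A⁄k] ≃ₗ[A] A) (hp : ℓ < p) : Subsingleton (multiDer k A M p) := by
  obtain ⟨J, _, y, φ, hφ, -⟩ := exists_dual_family (span_range_derivation k A) h e
  refine subsingleton_of_forall_eq 0 fun F => ?_
  obtain ⟨G, rfl⟩ := formToMultiDer_surjective hφ p F
  rw [alternatingMap_eq_zero (exteriorPower_eq_bot_of_le h hp) G, map_zero]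

omit [Module k M] [IsScalarTower k A M] in
theorem subsingleton_tensor_exteriorPower {ℓ q : ℕ} (h : ⋀[A]^(ℓ + 1) Ω[A⁄k] = ⊥) (hq : ℓ < q) :
    Subsingleton (M ⊗[A] ⋀[A]^q Ω[A⁄k]) := by
  have := Submodule.subsingleton_iff_eq_bot.2 (exteriorPower_eq_bot_of_le h hq)
  infer_instance

end Multiderivations

section Koszul

variable {k A X : Type*} [CommRing k] [AddCommGroup A] [Module k A] [AddCommGroup X] [Module k X]

/-- The part of the Chevalley–Eilenberg differential that involves only the bracket `β` of `A`:
`∑_{i<j} (-1)^{i+j} G({aᵢ, aⱼ}, a₀, …, (omit i, j), …, aₙ)`, with `j` encoded as `i.succAbove j`. -/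
def bracketSum (β : A →ₗ[k] A →ₗ[k] A) : (n : ℕ) → A [⋀^Fin n]→ₗ[k] X → (Fin (n + 1) → A) → X
  | 0, _, _ => 0
  | n + 1, G, v => ∑ i : Fin (n + 2), ∑ j : Fin (n + 1),
      if (i : ℕ) ≤ (j : ℕ) then
        (-1 : ℤ) ^ ((i : ℕ) + (j : ℕ) + 1) •
          G (Fin.cons (β (v i) (i.removeNth v j)) (j.removeNth (i.removeNth v)))
      else 0

theorem map_bracketSum {Y : Type*} [AddCommGroup Y] [Module k Y] (f : X →ₗ[k] Y)
    (β : A →ₗ[k] A →ₗ[k] A) {n : ℕ} (G : A [⋀^Fin n]→ₗ[k] X) (v : Fin (n + 1) → A) :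
    f (bracketSum β n G v) = bracketSum β n (f.compAlternatingMap G) v := by
  cases n with
  | zero => simp [bracketSum]
  | succ n =>
    simp only [bracketSum, map_sum, LinearMap.compAlternatingMap_apply]
    refine Finset.sum_congr rfl fun i _ => Finset.sum_congr rfl fun j _ => ?_
    split_ifs <;> simp

theorem map_cons_cons_swap {n : ℕ} (G : A [⋀^Fin (n + 2)]→ₗ[k] X) (a b : A) (c : Fin n → A) :
    G (Fin.cons a (Fin.cons b c)) = -G (Fin.cons b (Fin.cons a c)) := by
  have h := map_cons_removeNth G a (Fin.cons b (Fin.cons a c)) (Fin.succ 0)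
  rw [removeNth_succ_cons, ← Fin.cons_update] at h
  simpa using h

/-- Cartan's magic formula `L_b = ι_b d + d ι_b` for the bracket part of the differential. -/
theorem bracketSum_cons (β : A →ₗ[k] A →ₗ[k] A) {n : ℕ} (G : A [⋀^Fin (n + 1)]→ₗ[k] X) (b : A)
    (c : Fin (n + 1) → A) :
    bracketSum β (n + 1) G (Fin.cons b c)
      = -∑ j, G (Function.update c j (β b (c j))) - bracketSum β n (G.curryLeft b) c := by
  have hzero : (∑ j : Fin (n + 1),
      (-1 : ℤ) ^ ((j : ℕ) + 1) • G (Fin.cons (β b (c j)) (j.removeNth c)))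
        = -∑ j, G (Function.update c j (β b (c j))) := by
    rw [← Finset.sum_neg_distrib]
    refine Finset.sum_congr rfl fun j _ => ?_
    rw [map_cons_removeNth, smul_smul, pow_succ', neg_one_mul, neg_mul, ← mul_pow]
    simp
  rw [bracketSum, Fin.sum_univ_succ]
  simp only [Fin.val_zero, Nat.zero_le, if_true, Fin.cons_zero, Fin.removeNth_zero, Fin.tail_cons,
    zero_add, hzero]
  rw [sub_eq_add_neg]
  congr 1
  cases n with
  | zero => simp [bracketSum]
  | succ n =>
    rw [bracketSum, ← Finset.sum_neg_distrib]
    refine Finset.sum_congr rfl fun i _ => ?_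
    rw [Fin.sum_univ_succ, ← Finset.sum_neg_distrib]
    simp only [removeNth_succ_cons, Fin.val_succ, Fin.cons_succ, Fin.val_zero]
    rw [if_neg (by omega), zero_add]
    refine Finset.sum_congr rfl fun j _ => ?_
    simp only [add_le_add_iff_right]
    split_ifs
    · rw [map_cons_cons_swap, smul_neg]
      have hsign : (i : ℕ) + 1 + (j + 1) + 1 = i + j + 1 + 2 := by ring
      rw [hsign, pow_add, neg_one_sq, mul_one]
      rfl
    · rw [neg_zero]

end Koszul

section ChainMap

open KaehlerDifferential

variable {k A : Type u} [CommRing k] [CommRing A] [Algebra k A]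
variable {M : Type u} [AddCommGroup M] [Module k M] [Module A M] [IsScalarTower k A M]
variable {P : PoissonAlgebra k A}

theorem wedgeD_cons {n : ℕ} (b : A) (c : Fin n → A) :
    wedgeD k A (n + 1) (Fin.cons b c) = leftWedge (D k A b) n (wedgeD k A n c) :=
  Subtype.ext
    (ExteriorAlgebra.ιMulti_succ_apply fun i => D k A ((Fin.cons b c : Fin (n + 1) → A) i))

theorem wedgeD_mul_wedgeD {p q : ℕ} (b : Fin p → A) (a : Fin q → A) :
    (wedgeD k A p b * wedgeD k A q a : ExteriorAlgebra A Ω[A⁄k])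
      = wedgeD k A (p + q) (Fin.append b a) := by
  simp only [wedgeD, ExteriorAlgebra.ιMulti_mul_ιMulti]
  congr 1
  ext i
  cases i using Fin.addCases <;> simp

/-- The alternating map `v ↦ m ⊗ d v₁ ∧ ⋯ ∧ d vₙ`. -/
noncomputable def tmulWedgeD (n : ℕ) (m : M) : A [⋀^Fin n]→ₗ[k] M ⊗[A] ⋀[A]^n Ω[A⁄k] :=
  (formToMultiDer n
    ((TensorProduct.mk A M _ m).compAlternatingMap (exteriorPower.ιMulti A n))).1

theorem tmulWedgeD_apply {n : ℕ} (m : M) (v : Fin n → A) :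
    tmulWedgeD (k := k) n m v = m ⊗ₜ wedgeD k A n v := rfl

theorem curryLeft_tmulWedgeD (n : ℕ) (m : M) (b : A) :
    (tmulWedgeD (k := k) (n + 1) m).curryLeft b
      = (((leftWedge (D k A b) n).lTensor M).restrictScalars k).compAlternatingMap
          (tmulWedgeD n m) :=
  AlternatingMap.ext fun c => congrArg (m ⊗ₜ[A] ·) (wedgeD_cons b c)

theorem homology_d_tmul_wedgeD {R : RightPMod P M} (C : PHomologyData P M R) (n : ℕ) (m : M)
    (v : Fin (n + 1) → A) :
    C.d n (m ⊗ₜ wedgeD k A (n + 1) v)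
      = ∑ i : Fin (n + 1), (-1 : ℤ) ^ (i : ℕ) • (R.br m (v i) ⊗ₜ[A] wedgeD k A n (i.removeNth v))
        + bracketSum P.br n (tmulWedgeD n m) v := by
  cases n with
  | zero => rw [C.d_zero, bracketSum, add_zero]
  | succ n => exact C.d_succ n m v

theorem cohomology_δ_apply {R : RightPMod P M} (C : PCohomologyData P M R) (n : ℕ)
    (F : multiDer k A M n) (v : Fin (n + 1) → A) :
    (C.δ n F).1 v = ∑ i : Fin (n + 1), (-1 : ℤ) ^ ((i : ℕ) + 1) • R.br (F.1 (i.removeNth v)) (v i)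
      + bracketSum P.br n F.1 v := by
  cases n with
  | zero => rw [C.δ_zero, bracketSum, add_zero]
  | succ n => exact C.δ_succ n F v

/-- The Lie derivative `L_b` of `m ⊗ d a₁ ∧ ⋯ ∧ d aₙ` along the Hamiltonian field of `b`, with sign
convention `L_b(m ⊗ z) = {m, b} ⊗ z - m ⊗ L_{{b, -}} z`. -/
noncomputable def lieTmul (R : RightPMod P M) (b : A) (m : M) {n : ℕ} (a : Fin n → A) :
    M ⊗[A] ⋀[A]^n Ω[A⁄k] :=
  R.br m b ⊗ₜ wedgeD k A n a - ∑ j, m ⊗ₜ wedgeD k A n (Function.update a j (P.br b (a j)))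

theorem homology_d_tmul_wedgeD_cons {R : RightPMod P M} (C : PHomologyData P M R) {n : ℕ} (m : M)
    (b : A) (c : Fin (n + 1) → A) :
    C.d (n + 1) (m ⊗ₜ wedgeD k A (n + 2) (Fin.cons b c))
      = lieTmul R b m c
        - (leftWedge (D k A b) n).lTensor M (C.d n (m ⊗ₜ wedgeD k A (n + 1) c)) := by
  have hbracket : (leftWedge (D k A b) n).lTensor M (bracketSum P.br n (tmulWedgeD n m) c)
      = bracketSum P.br n ((tmulWedgeD (n + 1) m).curryLeft b) c := by
    rw [curryLeft_tmulWedgeD, ← map_bracketSum]; rfl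
  rw [homology_d_tmul_wedgeD, homology_d_tmul_wedgeD, bracketSum_cons, map_add, hbracket,
    Fin.sum_univ_succ, lieTmul]
  simp only [removeNth_succ_cons, wedgeD_cons, Fin.cons_succ, Fin.cons_zero, Fin.removeNth_zero,
    Fin.tail_cons, Fin.val_succ, Fin.val_zero, pow_succ', pow_zero, one_smul, neg_one_mul, neg_smul,
    Finset.sum_neg_distrib, map_sum, map_zsmul, LinearMap.lTensor_tmul, tmulWedgeD_apply]
  abel

theorem cohomology_δ_apply_cons {R : RightPMod P M} (C : PCohomologyData P M R) {n : ℕ}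
    {F : multiDer k A M (n + 1)} {b : A} {G : multiDer k A M n} (hG : G.1 = F.1.curryLeft b)
    (c : Fin (n + 1) → A) :
    (C.δ (n + 1) F).1 (Fin.cons b c)
      = -(R.br (F.1 c) b + ∑ j, F.1 (Function.update c j (P.br b (c j)))) - (C.δ n G).1 c := by
  rw [cohomology_δ_apply, cohomology_δ_apply, bracketSum_cons, Fin.sum_univ_succ, hG]
  simp only [removeNth_succ_cons, Fin.cons_succ, Fin.cons_zero, Fin.removeNth_zero,
    Fin.tail_cons, Fin.val_succ, Fin.val_zero, pow_succ', pow_zero, one_smul, neg_one_mul, neg_smul,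
    Finset.sum_neg_distrib, AlternatingMap.curryLeft_apply_apply, Matrix.vecCons, mul_one]
  abel

theorem dualityMap_cons {ℓ : ℕ} (ε : ⋀[A]^ℓ Ω[A⁄k] →ₗ[A] A) {p q : ℕ}
    (τ : M ⊗[A] ⋀[A]^q Ω[A⁄k]) (b : A) (c : Fin p → A) :
    (dualityMap ε M (p + 1) q τ).1 (Fin.cons b c)
      = (-1 : ℤ) ^ p •
          (dualityMap ε M p (q + 1) ((leftWedge (D k A b) q).lTensor M τ)).1 c := by
  rw [dualityMap_apply, dualityMap_apply, wedgeD_cons, leftWedge_coe, pairing_lTensor_leftWedge,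
    ι_mul_eq_neg_one_pow_smul _ (wedgeD k A p c).2, map_smul, LinearMap.smul_apply,
    ← Int.cast_smul_eq_zsmul A]
  push_cast
  rfl

theorem append_update_left {X : Type*} {p q : ℕ} (b : Fin p → X) (a : Fin q → X) (j : Fin p)
    (x : X) :
    Fin.append (Function.update b j x) a
      = Function.update (Fin.append b a) (Fin.castAdd q j) x := by
  ext i
  cases i using Fin.addCases with
  | left i => simp [Function.update_apply]
  | right i => simp [Function.update_apply, Fin.ext_iff]; omega

theorem append_update_right {X : Type*} {p q : ℕ} (b : Fin p → X) (a : Fin q → X) (j : Fin q)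
    (x : X) :
    Fin.append b (Function.update a j x)
      = Function.update (Fin.append b a) (Fin.natAdd p j) x := by
  ext i
  cases i using Fin.addCases with
  | left i => simp [Function.update_apply, Fin.ext_iff]; omega
  | right i => simp [Function.update_apply]

theorem br_one_right (P : PoissonAlgebra k A) (a : A) : P.br a 1 = 0 := by
  have h := P.leibniz 1 1 a
  rw [one_mul, one_mul, mul_one] at h
  rw [P.skew, left_eq_add.1 h, neg_zero]

/-- The linear form `ε` on top forms intertwines the Lie derivative of forms with the bracket of `A`
twisted by `δ`; this is the statement that `δ` is the modular derivation of the volume form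
corresponding to `ε`. -/
def IsModular (P : PoissonAlgebra k A) (δ : PoissonDerivation P) {ℓ : ℕ}
    (ε : ⋀[A]^ℓ Ω[A⁄k] →ₗ[A] A) : Prop :=
  ∀ (b : A) (v : Fin ℓ → A), P.br (ε (wedgeD k A ℓ v)) b
    = δ.d b * ε (wedgeD k A ℓ v) - ∑ i, ε (wedgeD k A ℓ (Function.update v i (P.br b (v i))))

theorem isModular_of_lieDerivative {ℓ : ℕ} {Lω : LeftPMod P (⋀[A]^ℓ Ω[A⁄k])}
    (hLω : ∀ (a f : A) (v : Fin ℓ → A), Lω.br a (f • wedgeD k A ℓ v)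
      = P.br a f • wedgeD k A ℓ v
        + f • ∑ i, wedgeD k A ℓ (Function.update v i (P.br a (v i))))
    {δ : PoissonDerivation P} {ε : ⋀[A]^ℓ Ω[A⁄k] →ₗ[A] A}
    (hε : ∀ a x, ε (Lω.br a x) = P.br a (ε x) + δ.d a * ε x) : IsModular P δ ε := by
  intro b v
  have h := hLω b 1 v
  rw [br_one_right, zero_smul, zero_add, one_smul, one_smul] at h
  rw [P.skew, ← map_sum, ← h, hε]
  ring

variable {δ : PoissonDerivation P} {R Rδ : RightPMod P M}

theorem dualityMap_lieTmul {ℓ p q : ℕ} (hpq : p + q = ℓ) {ε : ⋀[A]^ℓ Ω[A⁄k] →ₗ[A] A}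
    (hε : IsModular P δ ε) (hRδ : ∀ m a, Rδ.br m a = R.br m a + δ.d a • m) (b : A) (m : M)
    (a : Fin q → A) (c : Fin p → A) :
    (dualityMap ε M p q (lieTmul Rδ b m a)).1 c
      = R.br ((dualityMap ε M p q (m ⊗ₜ wedgeD k A q a)).1 c) b
        + ∑ j, (dualityMap ε M p q (m ⊗ₜ wedgeD k A q a)).1
            (Function.update c j (P.br b (c j))) := by
  subst hpq
  have hΨ (m : M) (a : Fin q → A) (c : Fin p → A) :
      pairing (ε ∘ₗ proj (p + q)) M q (wedgeD k A p c) (m ⊗ₜ wedgeD k A q a)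
        = ε (wedgeD k A (p + q) (Fin.append c a)) • m := by
    rw [pairing_tmul, wedgeD_mul_wedgeD, LinearMap.comp_apply, proj_coe]
  rw [dualityMap_apply, lieTmul]
  simp only [dualityMap_apply, map_sub, map_sum, hΨ, R.act, hε b, hRδ, Fin.sum_univ_add,
    Fin.append_left, Fin.append_right, append_update_left, append_update_right, sub_smul, add_smul,
    smul_add, Finset.sum_smul, smul_smul]
  rw [mul_comm (δ.d b)]
  abel

theorem curryLeft_dualityMap {ℓ p q : ℕ} (ε : ⋀[A]^ℓ Ω[A⁄k] →ₗ[A] A)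
    (τ : M ⊗[A] ⋀[A]^q Ω[A⁄k]) (b : A) :
    ((-1 : ℤ) ^ p • dualityMap ε M p (q + 1) ((leftWedge (D k A b) q).lTensor M τ)).1
      = (dualityMap ε M (p + 1) q τ).1.curryLeft b :=
  AlternatingMap.ext fun c => (dualityMap_cons ε τ b c).symm

theorem neg_one_pow_smul_dualityMap_cons {ℓ p q : ℕ} (ε : ⋀[A]^ℓ Ω[A⁄k] →ₗ[A] A)
    (τ : M ⊗[A] ⋀[A]^q Ω[A⁄k]) (b : A) (c : Fin p → A) :
    ((-1 : ℤ) ^ (p + 1) • dualityMap ε M (p + 1) q τ).1 (Fin.cons b c)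
      = -(dualityMap ε M p (q + 1) ((leftWedge (D k A b) q).lTensor M τ)).1 c := by
  refine (congrArg ((-1 : ℤ) ^ (p + 1) • ·) (dualityMap_cons ε τ b c)).trans ?_
  rw [smul_smul, pow_succ', mul_assoc, ← mul_pow, neg_one_mul (-1 : ℤ), neg_neg, one_pow, mul_one,
    neg_one_smul]

/-- Cartan's formula reduces the differentials of degree `p + 1` to those of degree `p`, the error
terms being Lie derivatives, which the duality map intertwines because `ε` is modular. -/
theorem cohomology_δ_dualityMap_tmul_wedgeD {ℓ p q : ℕ} (hpq : p + (q + 1) = ℓ)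
    (hvol : ⋀[A]^(ℓ + 1) Ω[A⁄k] = ⊥) {ε : ⋀[A]^ℓ Ω[A⁄k] →ₗ[A] A} (hε : IsModular P δ ε)
    (hRδ : ∀ m a, Rδ.br m a = R.br m a + δ.d a • m) (DC : PCohomologyData P M R)
    (Dδ : PHomologyData P M Rδ) (m : M) (a : Fin (q + 1) → A) :
    DC.δ p (dualityMap ε M p (q + 1) (m ⊗ₜ wedgeD k A (q + 1) a))
      = (-1 : ℤ) ^ (p + 1) •
          dualityMap ε M (p + 1) q (Dδ.d q (m ⊗ₜ wedgeD k A (q + 1) a)) := by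
  induction p generalizing q with
  | zero =>
    refine Subtype.ext (AlternatingMap.ext (Fin.forall_fin_succ_pi.2 fun b c => ?_))
    have hlie := dualityMap_lieTmul hpq hε hRδ b m a c
    rw [Fin.sum_univ_zero, add_zero] at hlie
    have := subsingleton_tensor_exteriorPower (M := M) hvol (show ℓ < q + 2 by omega)
    have hcartan := homology_d_tmul_wedgeD_cons Dδ m b a
    rw [Subsingleton.elim (m ⊗ₜ wedgeD k A (q + 2) _) 0, map_zero, eq_comm, sub_eq_zero] at hcartan
    rw [neg_one_pow_smul_dualityMap_cons, ← hcartan, hlie, cohomology_δ_apply, bracketSum,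
      Fin.sum_univ_one]
    simp
  | succ p ih =>
    refine Subtype.ext (AlternatingMap.ext (Fin.forall_fin_succ_pi.2 fun b c => ?_))
    have hlie := dualityMap_lieTmul hpq hε hRδ b m a c
    have hsign : (-1 : ℤ) ^ p * (-1) ^ (p + 1) = -1 := by
      rw [pow_succ, ← mul_assoc, ← mul_pow, neg_one_mul (-1 : ℤ), neg_neg, one_pow, one_mul]
    have hih := ih (show p + (q + 1 + 1) = ℓ by omega) (Fin.cons b a)
    rw [homology_d_tmul_wedgeD_cons, wedgeD_cons, ← LinearMap.lTensor_tmul] at hih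
    have hcurry := curryLeft_dualityMap (p := p) ε (m ⊗ₜ wedgeD k A (q + 1) a) b
    rw [neg_one_pow_smul_dualityMap_cons, cohomology_δ_apply_cons DC hcurry, ← hlie, map_zsmul, hih,
      smul_smul, hsign, neg_one_smul, map_sub, Submodule.coe_neg, Submodule.coe_sub,
      AlternatingMap.neg_apply, AlternatingMap.sub_apply]
    abel

theorem cohomology_δ_dualityMap {ℓ p q : ℕ} (hpq : p + (q + 1) = ℓ)
    (hvol : ⋀[A]^(ℓ + 1) Ω[A⁄k] = ⊥) {ε : ⋀[A]^ℓ Ω[A⁄k] →ₗ[A] A} (hε : IsModular P δ ε)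
    (hRδ : ∀ m a, Rδ.br m a = R.br m a + δ.d a • m) (DC : PCohomologyData P M R)
    (Dδ : PHomologyData P M Rδ) :
    DC.δ p ∘ₗ dualityMap ε M p (q + 1)
      = (-1 : ℤ) ^ (p + 1) • dualityMap ε M (p + 1) q ∘ₗ Dδ.d q := by
  ext τ : 1
  induction τ with
  | zero => simp only [map_zero]
  | add τ σ hτ hσ => simp only [map_add, hτ, hσ]
  | tmul m z =>
    have hz : z ∈ Submodule.span A (Set.range (wedgeD k A (q + 1))) :=
      (span_range_ιMulti_comp (span_range_derivation k A) (q + 1)).ge trivial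
    induction hz using Submodule.span_induction generalizing m with
    | zero => simp only [tmul_zero, map_zero]
    | add x y _ _ hx hy => simp only [tmul_add, map_add, hx, hy]
    | smul f x _ h => rw [← smul_tmul, h]
    | mem x hx =>
      obtain ⟨a, rfl⟩ := hx
      exact cohomology_δ_dualityMap_tmul_wedgeD hpq hvol hε hRδ DC Dδ m a

end ChainMap

section Subquotients

variable {k X Y X' Y' : Type*} [CommRing k] [AddCommGroup X] [Module k X] [AddCommGroup Y]
  [Module k Y] [AddCommGroup X'] [Module k X'] [AddCommGroup Y'] [Module k Y']

theorem nonempty_subquotient_equiv {ψ : X →ₗ[k] Y} (hψ : Function.Bijective ψ)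
    (K B : Submodule k Y) :
    Nonempty (((K.comap ψ) ⧸ (B.comap ψ).submoduleOf (K.comap ψ)) ≃ₗ[k] (K ⧸ B.submoduleOf K)) := by
  let ψ' := LinearEquiv.ofBijective ψ hψ
  have hK : (K.comap ψ).map (ψ' : X →ₗ[k] Y) = K := Submodule.map_comap_eq_of_surjective hψ.2 K
  refine ⟨Submodule.Quotient.equiv _ _ (ψ'.ofSubmodules _ K hK) ?_⟩
  ext y
  rw [Submodule.mem_map_equiv]
  change ψ' (ψ'.symm y) ∈ B ↔ _
  rw [ψ'.apply_symm_apply]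
  rfl

theorem nonempty_quotient_equiv_subquotient {K : Submodule k X} (hK : K = ⊤) (B : Submodule k X) :
    Nonempty ((X ⧸ B) ≃ₗ[k] (K ⧸ B.submoduleOf K)) := by
  subst hK
  refine ⟨Submodule.Quotient.equiv _ _ Submodule.topEquiv.symm ?_⟩
  ext y
  rw [Submodule.mem_map_equiv]
  rfl

variable {f : X →ₗ[k] X'} {g : Y →ₗ[k] Y'} {ψ : X →ₗ[k] Y} {ψ' : X' →ₗ[k] Y'} {u : ℤ}

theorem ker_eq_comap_ker (hψ' : Function.Injective ψ') (hu : IsUnit u)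
    (h : g ∘ₗ ψ = u • ψ' ∘ₗ f) : LinearMap.ker f = (LinearMap.ker g).comap ψ := by
  ext x
  rw [Submodule.mem_comap, LinearMap.mem_ker, LinearMap.mem_ker, ← LinearMap.comp_apply, h,
    LinearMap.smul_apply, LinearMap.comp_apply, hu.smul_eq_zero, map_eq_zero_iff ψ' hψ']

theorem range_eq_comap_range (hψ : Function.Surjective ψ) (hψ' : Function.Injective ψ')
    (hu : IsUnit u) (h : g ∘ₗ ψ = u • ψ' ∘ₗ f) :
    LinearMap.range f = (LinearMap.range g).comap ψ' := by
  obtain ⟨u, rfl⟩ := hu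
  have hgψ (x : X) : g (ψ x) = (u : ℤ) • ψ' (f x) := LinearMap.congr_fun h x
  ext x'
  constructor
  · rintro ⟨x, rfl⟩
    exact ⟨ψ ((u⁻¹ : ℤˣ) • x), by
      rw [hgψ, ← Units.smul_def, LinearMap.map_smul_of_tower, LinearMap.map_smul_of_tower,
        smul_inv_smul]⟩
  · rintro ⟨y, hy⟩
    obtain ⟨x, rfl⟩ := hψ y
    exact ⟨(u : ℤ) • x, hψ' (by rw [map_zsmul, map_zsmul, ← hgψ, hy])⟩

end Subquotients

section Comparison

open KaehlerDifferential

variable {k A : Type u} [CommRing k] [CommRing A] [Algebra k A]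
variable {M : Type u} [AddCommGroup M] [Module k M] [Module A M] [IsScalarTower k A M]
variable {P : PoissonAlgebra k A} {R Rδ : RightPMod P M}

/-- The cycles of the Poisson chain complex; in degree `0` every chain is a cycle. -/
noncomputable def cycles (C : PHomologyData P M R) : ∀ n, Submodule k (M ⊗[A] ⋀[A]^n Ω[A⁄k])
  | 0 => ⊤
  | n + 1 => LinearMap.ker (C.d n)

/-- The coboundaries of the Poisson cochain complex; in degree `0` only `0` is a coboundary. -/
noncomputable def coboundaries (C : PCohomologyData P M R) : ∀ n, Submodule k (multiDer k A M n)
  | 0 => ⊥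
  | n + 1 => LinearMap.range (C.δ n)

theorem nonempty_homology_equiv (C : PHomologyData P M R) (n : ℕ) :
    Nonempty (C.homology n ≃ₗ[k]
      (cycles C n ⧸ (LinearMap.range (C.d n)).submoduleOf (cycles C n))) := by
  cases n with
  | zero => exact nonempty_quotient_equiv_subquotient rfl _
  | succ n => exact ⟨LinearEquiv.refl k _⟩

theorem nonempty_cohomology_equiv (C : PCohomologyData P M R) (n : ℕ) :
    Nonempty (C.cohomology n ≃ₗ[k]
      (LinearMap.ker (C.δ n) ⧸ (coboundaries C n).submoduleOf (LinearMap.ker (C.δ n)))) := by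
  cases n with
  | zero =>
    have hbot : (coboundaries C 0).submoduleOf (LinearMap.ker (C.δ 0)) = ⊥ := by
      rw [coboundaries, Submodule.submoduleOf, Submodule.comap_bot, Submodule.ker_subtype]
    exact ⟨(Submodule.quotEquivOfEqBot _ hbot).symm⟩
  | succ n => exact ⟨LinearEquiv.refl k _⟩

theorem subsingleton_homology (C : PHomologyData P M R) (n : ℕ)
    [Subsingleton (M ⊗[A] ⋀[A]^n Ω[A⁄k])] : Subsingleton (C.homology n) :=
  (nonempty_homology_equiv C n).some.toEquiv.subsingleton

theorem subsingleton_cohomology (C : PCohomologyData P M R) (n : ℕ)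
    [Subsingleton (multiDer k A M n)] : Subsingleton (C.cohomology n) :=
  (nonempty_cohomology_equiv C n).some.toEquiv.subsingleton

variable {ℓ : ℕ} {δ : PoissonDerivation P} {e : ⋀[A]^ℓ Ω[A⁄k] ≃ₗ[A] A}

theorem cycles_eq_comap (hℓ : IsUnit (ℓ.factorial : A)) (hvol : ⋀[A]^(ℓ + 1) Ω[A⁄k] = ⊥)
    (he : IsModular P δ e.toLinearMap) (hRδ : ∀ m a, Rδ.br m a = R.br m a + δ.d a • m)
    (DC : PCohomologyData P M R) (Dδ : PHomologyData P M Rδ) {p q : ℕ} (hpq : p + q = ℓ) :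
    cycles Dδ q = (LinearMap.ker (DC.δ p)).comap (dualityMap e.toLinearMap M p q) := by
  cases q with
  | zero =>
    have := subsingleton_multiDer (M := M) hvol e (show ℓ < p + 1 by omega)
    rw [Subsingleton.elim (DC.δ p) 0, LinearMap.ker_zero, Submodule.comap_top, cycles]
  | succ q =>
    exact ker_eq_comap_ker (dualityMap_bijective hℓ hvol e (by omega)).1
      (isUnit_one.neg.pow (p + 1)) (cohomology_δ_dualityMap hpq hvol he hRδ DC Dδ)

theorem boundaries_eq_comap (hℓ : IsUnit (ℓ.factorial : A)) (hvol : ⋀[A]^(ℓ + 1) Ω[A⁄k] = ⊥)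
    (he : IsModular P δ e.toLinearMap) (hRδ : ∀ m a, Rδ.br m a = R.br m a + δ.d a • m)
    (DC : PCohomologyData P M R) (Dδ : PHomologyData P M Rδ) {p q : ℕ} (hpq : p + q = ℓ) :
    LinearMap.range (Dδ.d q) = (coboundaries DC p).comap (dualityMap e.toLinearMap M p q) := by
  have hinj := (dualityMap_bijective (M := M) hℓ hvol e hpq).1
  cases p with
  | zero =>
    have := subsingleton_tensor_exteriorPower (M := M) hvol (show ℓ < q + 1 by omega)
    rw [Subsingleton.elim (Dδ.d q) 0, LinearMap.range_zero, coboundaries, Submodule.comap_bot,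
      LinearMap.ker_eq_bot.2 hinj]
  | succ p =>
    have hpq' : p + (q + 1) = ℓ := by omega
    exact range_eq_comap_range (dualityMap_bijective hℓ hvol e hpq').2 hinj
      (isUnit_one.neg.pow (p + 1)) (cohomology_δ_dualityMap hpq' hvol he hRδ DC Dδ)

theorem nonempty_cohomology_equiv_homology (hℓ : IsUnit (ℓ.factorial : A))
    (hvol : ⋀[A]^(ℓ + 1) Ω[A⁄k] = ⊥) (he : IsModular P δ e.toLinearMap)
    (hRδ : ∀ m a, Rδ.br m a = R.br m a + δ.d a • m)
    (DC : PCohomologyData P M R) (Dδ : PHomologyData P M Rδ) {p q : ℕ} (hpq : p + q = ℓ) :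
    Nonempty (DC.cohomology p ≃ₗ[k] Dδ.homology q) := by
  obtain ⟨φ⟩ := nonempty_homology_equiv Dδ q
  obtain ⟨χ⟩ := nonempty_cohomology_equiv DC p
  rw [cycles_eq_comap hℓ hvol he hRδ DC Dδ hpq, boundaries_eq_comap hℓ hvol he hRδ DC Dδ hpq] at φ
  obtain ⟨θ⟩ := nonempty_subquotient_equiv (dualityMap_bijective hℓ hvol e hpq)
    (LinearMap.ker (DC.δ p)) (coboundaries DC p)
  exact ⟨χ.trans (θ.symm.trans φ.symm)⟩

end Comparison

section DimensionZero

open KaehlerDifferential Polynomial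

theorem isUnit_natCast_of_ne_zero (k : Type*) {A : Type*} [Field k] [CharZero k] [CommRing A]
    [Algebra k A] {n : ℕ} (hn : n ≠ 0) : IsUnit (n : A) := by
  rw [← map_natCast (algebraMap k A)]
  exact (Nat.cast_ne_zero.2 hn).isUnit.map _

/-- Differentiating `x ^ (r + 1) * (d x) ^ (m + 1) = 0` and cancelling `r + 1` trades one factor `x`
for two factors `d x`. -/
theorem isNilpotent_derivation_of_pow_mul_pow_eq_zero {k A : Type*} [CommRing k] [CommRing A]
    [Algebra k A] (hA : ∀ n : ℕ, n ≠ 0 → IsUnit (n : A)) (d : Derivation k A A) {x : A} {r m : ℕ}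
    (h : x ^ r * d x ^ m = 0) : IsNilpotent (d x) := by
  induction r generalizing m with
  | zero => exact ⟨m, by rwa [pow_zero, one_mul] at h⟩
  | succ r ih =>
    have hsucc : x ^ (r + 1) * d x ^ (m + 1) = 0 := by rw [pow_succ (d x), ← mul_assoc, h, zero_mul]
    have hderiv := congrArg d hsucc
    rw [d.leibniz, d.leibniz_pow, d.leibniz_pow, map_zero] at hderiv
    simp only [add_tsub_cancel_right, smul_eq_mul, nsmul_eq_mul] at hderiv
    refine ih (m := m + 2) ((hA (r + 1) r.succ_ne_zero).mul_right_eq_zero.1 ?_)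
    linear_combination hderiv - ((m + 1 : ℕ) : A) * d (d x) * h

theorem isNilpotent_derivation {k A : Type*} [CommRing k] [CommRing A] [Algebra k A]
    (hA : ∀ n : ℕ, n ≠ 0 → IsUnit (n : A)) (d : Derivation k A A) {x : A} (hx : IsNilpotent x) :
    IsNilpotent (d x) := by
  obtain ⟨n, hn⟩ := hx
  exact isNilpotent_derivation_of_pow_mul_pow_eq_zero hA d (m := 0) (by rw [hn, zero_mul])

theorem derivation_mem_nilradical_of_isIntegral {k A : Type*} [Field k] [CharZero k] [CommRing A]
    [Algebra k A] (d : Derivation k A A) {a : A} (ha : IsIntegral k a) : d a ∈ nilradical A := by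
  obtain ⟨g, n, hsqf, -, hdvd⟩ := exists_squarefree_dvd_pow_of_ne_zero (minpoly.ne_zero ha)
  obtain ⟨s, t, hst⟩ := PerfectField.separable_iff_squarefree.2 hsqf
  have hg : IsNilpotent (aeval a g) :=
    ⟨n, by rw [← map_pow]; exact aeval_eq_zero_of_dvd_aeval_eq_zero hdvd (minpoly.aeval k a)⟩
  have hdg : aeval a (derivative g) * d a ∈ nilradical A := by
    rw [← smul_eq_mul, ← Derivation.map_aeval]
    exact isNilpotent_derivation (fun _ => isUnit_natCast_of_ne_zero k) d hg
  have hone : aeval a s * aeval a g + aeval a t * aeval a (derivative g) = 1 := by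
    rw [← map_mul, ← map_mul, ← map_add, hst, map_one]
  have hda : d a = aeval a s * d a * aeval a g + aeval a t * (aeval a (derivative g) * d a) := by
    linear_combination (-d a) * hone
  rw [hda]
  exact add_mem (Ideal.mul_mem_left _ _ hg) (Ideal.mul_mem_left _ _ hdg)

theorem subsingleton_of_forall_dual_mem {R V : Type*} [CommRing R] [AddCommGroup V] [Module R V]
    [Module.Projective R V] [Module.Finite R V] {I : Ideal R} (hI : I ≤ Ideal.jacobson ⊥)
    (h : ∀ (f : Module.Dual R V) (v : V), f v ∈ I) : Subsingleton V := by
  have htop : (⊤ : Submodule R V) ≤ I • ⊤ := by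
    intro v _
    obtain ⟨s, hs⟩ := Module.projective_def.1 ‹Module.Projective R V›
    rw [← hs v, Finsupp.linearCombination_apply]
    exact Submodule.sum_mem _ fun i _ =>
      Submodule.smul_mem_smul (h (Finsupp.lapply i ∘ₗ s) v) trivial
  exact Submodule.subsingleton_iff R |>.1 <| subsingleton_of_bot_eq_top
    (Submodule.eq_bot_of_le_smul_of_le_jacobson_bot I ⊤ Module.Finite.fg_top htop hI).symm

theorem subsingleton_kaehlerDifferential_of_isIntegral (k A : Type*) [Field k] [CharZero k]
    [CommRing A] [Algebra k A] [Algebra.IsIntegral k A] [Module.Finite A Ω[A⁄k]]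
    [Module.Projective A Ω[A⁄k]] : Subsingleton Ω[A⁄k] := by
  refine subsingleton_of_forall_dual_mem (I := nilradical A) Ideal.radical_le_jacobson fun f v => ?_
  have hle : Submodule.span A (Set.range (D k A)) ≤ Submodule.comap f (nilradical A) := by
    rw [Submodule.span_le]
    rintro _ ⟨a, rfl⟩
    exact derivation_mem_nilradical_of_isIntegral (f.compDer (D k A))
      (Algebra.IsIntegral.isIntegral a)
  exact hle ((span_range_derivation k A).ge trivial)

theorem exteriorPower_kaehlerDifferential_succ_eq_bot {k A : Type*} [Field k] [CharZero k]
    [CommRing A] [Algebra k A] [Algebra.FiniteType k A] [Module.Projective A Ω[A⁄k]] {ℓ : ℕ}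
    (hdim : ringKrullDim A = ℓ) (e : ⋀[A]^ℓ Ω[A⁄k] ≃ₗ[A] A) : ⋀[A]^(ℓ + 1) Ω[A⁄k] = ⊥ := by
  cases ℓ with
  | succ n => exact exteriorPower_succ_eq_bot e
  | zero =>
    have : Ring.KrullDimLE 0 A := (Order.krullDimLE_iff 0 _).2 hdim.le
    have : Module.Finite k A := (Module.finite_iff_krullDimLE_zero k A).2 this
    have := subsingleton_kaehlerDifferential_of_isIntegral k A
    exact Submodule.subsingleton_iff_eq_bot.1 (exteriorPower.oneEquiv A Ω[A⁄k]).subsingleton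

end DimensionZero

end PoissonDuality

open PoissonDuality

theorem stmt_1_general {k A : Type u} [CommRing k] [CommRing A] [Algebra k A]
    (ℓ : ℕ) (hℓ : IsUnit (ℓ.factorial : A)) (hvol : ⋀[A]^(ℓ + 1) (Ω[A⁄k]) = ⊥)
    (P : PoissonAlgebra k A)
    (Lω : LeftPMod P (⋀[A]^ℓ (Ω[A⁄k]) : Submodule A _))
    (hLω : ∀ (a f : A) (v : Fin ℓ → A),
      Lω.br a (f • wedgeD k A ℓ v)
        = (P.br a f) • wedgeD k A ℓ v
          + f • ∑ i : Fin ℓ, wedgeD k A ℓ (Function.update v i (P.br a (v i))))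
    (δ : PoissonDerivation P)
    (e : (⋀[A]^ℓ (Ω[A⁄k]) : Submodule A _) ≃ₗ[A] A)
    (hmod : ∀ (a : A) (x : (⋀[A]^ℓ (Ω[A⁄k]) : Submodule A _)),
      e (Lω.br a x) = P.br a (e x) + δ.d a * e x)
    (M : Type u) [AddCommGroup M] [Module k M] [Module A M] [IsScalarTower k A M]
    (R : RightPMod P M)
    (Rδ : RightPMod P M) (hRδ : ∀ m a, Rδ.br m a = R.br m a + δ.d a • m)
    (DC : PCohomologyData P M R)
    (Dδ : PHomologyData P M Rδ) :
    (∀ i : ℕ, i ≤ ℓ → Nonempty (DC.cohomology i ≃ₗ[k] Dδ.homology (ℓ - i))) ∧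
    (∀ i : ℕ, ℓ < i → Subsingleton (DC.cohomology i)) ∧
    (∀ j : ℕ, ℓ < j → Subsingleton (Dδ.homology j)) := by
  have he : IsModular P δ e.toLinearMap := isModular_of_lieDerivative hLω hmod
  refine ⟨fun i hi => ?_, fun i hi => ?_, fun j hj => ?_⟩
  · exact nonempty_cohomology_equiv_homology hℓ hvol he hRδ DC Dδ (Nat.add_sub_cancel' hi)
  · have := subsingleton_multiDer (M := M) hvol e hi
    exact subsingleton_cohomology DC i
  · have := subsingleton_tensor_exteriorPower (M := M) hvol hj
    exact subsingleton_homology Dδ j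

/-! ### STATEMENT 1:
Let `A` be a Calabi–Yau Poisson algebra of dimension `ℓ` over `k`: an affine smooth
Poisson algebra of Krull dimension `ℓ` such that `ω_A = ⋀[A]^ℓ Ω[A⁄k]` is free of rank
one as an `A`-module, with modular derivation `δ`, i.e. `ω_A ≅ ^δA` as left Poisson
modules, where `ω_A` carries the Lie-derivative left Poisson structure `Lω` and `^δA`
has bracket `{a,b}_δ = {a,b} + δ(a)b`.  Then for every right Poisson module `M` and
every integer `i` there is an isomorphism `HP^i(M) ≅ HP_{ℓ-i}(M^δ)` of `k`-vector
spaces, where `M^δ` is the twist of `M` by `δ` (bracket `{m,a}_δ = {m,a} + δ(a) • m`);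
for `i > ℓ` or `i < 0` this says that the corresponding groups vanish. -/
theorem stmt_1 {k A : Type u} [Field k] [IsAlgClosed k] [CharZero k]
    [CommRing A] [Algebra k A] [Algebra.Smooth k A] [Algebra.FiniteType k A]
    (ℓ : ℕ) (hdim : ringKrullDim A = ℓ)
    (P : PoissonAlgebra k A)
    -- the Lie-derivative left Poisson structure on `ω_A`
    (Lω : LeftPMod P (⋀[A]^ℓ (Ω[A⁄k]) : Submodule A _))
    (hLω : ∀ (a f : A) (v : Fin ℓ → A),
      Lω.br a (f • wedgeD k A ℓ v)
        = (P.br a f) • wedgeD k A ℓ v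
          + f • ∑ i : Fin ℓ, wedgeD k A ℓ (Function.update v i (P.br a (v i))))
    -- `δ` is the modular derivation: `ω_A ≅ ^δA` as left Poisson modules
    (δ : PoissonDerivation P)
    (e : (⋀[A]^ℓ (Ω[A⁄k]) : Submodule A _) ≃ₗ[A] A)
    (hmod : ∀ (a : A) (x : (⋀[A]^ℓ (Ω[A⁄k]) : Submodule A _)),
      e (Lω.br a x) = P.br a (e x) + δ.d a * e x)
    -- a right Poisson module `M` and its twist `M^δ`
    (M : Type u) [AddCommGroup M] [Module k M] [Module A M] [IsScalarTower k A M]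
    (R : RightPMod P M)
    (Rδ : RightPMod P M) (hRδ : ∀ m a, Rδ.br m a = R.br m a + δ.d a • m)
    -- Poisson (co)homology data
    (DC : PCohomologyData P M R)
    (Dδ : PHomologyData P M Rδ) :
    (∀ i : ℕ, i ≤ ℓ → Nonempty (DC.cohomology i ≃ₗ[k] Dδ.homology (ℓ - i))) ∧
    (∀ i : ℕ, ℓ < i → Subsingleton (DC.cohomology i)) ∧
    (∀ j : ℕ, ℓ < j → Subsingleton (Dδ.homology j)) := by
  exact stmt_1_general ℓ (isUnit_natCast_of_ne_zero k ℓ.factorial_ne_zero)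
    (exteriorPower_kaehlerDifferential_succ_eq_bot hdim e) P Lω hLω δ e hmod M R Rδ hRδ DC Dδ
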